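/- arXiv:1410.2342 — 6 statements merged into one kernel-verified Lean document; each statement's English description precedes it below -/
import Mathlib

section
/- If the pair (G, A) is stackable with normal form set C (containing the empty word), then C is closed under taking prefixes: whenever w ∈ C and p is a prefix of w, then p ∈ C. -/
namespace Stk

variable {G : Type*} [Group G] {A : Type*}

/-- Evaluation of a word over the generating alphabet in the group. -/
def eval (ρ : A → G) (w : List A) : G := (w.map ρ).prod

/-- `C` is a set of normal forms: evaluation restricted to `C` is a bijection onto `G`. -/
def IsNormalFormSet (ρ : A → G) (C : Set (List A)) : Prop :=
  ∀ g : G, ∃! w : List A, w ∈ C ∧ eval ρ w = g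

/-- The directed edge `(g, a)` of the Cayley graph is degenerate with respect to `C`. -/
def IsDegenerate (ρ : A → G) (ι : A → A) (C : Set (List A)) (e : G × A) : Prop :=
  ∃ y₁ y₂ : List A, y₁ ∈ C ∧ eval ρ y₁ = e.1 ∧ y₂ ∈ C ∧ eval ρ y₂ = e.1 * ρ e.2 ∧
    (y₁ ++ [e.2] = y₂ ∨ y₁ = y₂ ++ [ι e.2])

/-- A non-degenerate edge is recursive. -/
def IsRecursive (ρ : A → G) (ι : A → A) (C : Set (List A)) (e : G × A) : Prop :=
  ¬ IsDegenerate ρ ι C e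

/-- `e` is one of the edges along the path starting at `g` labeled by the word `w`. -/
def EdgeOnPath (ρ : A → G) (g : G) (w : List A) (e : G × A) : Prop :=
  ∃ i : Fin w.length, e = (g * eval ρ (w.take i), w.get i)

/-- A stackable structure for `(G, A)`: a normal form set `C` containing the empty word,
a well-founded strict partial order `lt` on the recursive edges, and a constant `k`,
such that each edge `(g, a)` admits a word of length at most `k` evaluating to `ρ a`,
each of whose edges along the path from `g` is degenerate or recursive and `lt`-below
`(g, a)`. -/
def IsStackableStructure (ρ : A → G) (ι : A → A) (C : Set (List A))
    (lt : G × A → G × A → Prop) (k : ℕ) : Prop :=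
  ([] : List A) ∈ C ∧ IsNormalFormSet ρ C ∧
  (∀ e e' : G × A, lt e e' → IsRecursive ρ ι C e ∧ IsRecursive ρ ι C e') ∧
  Transitive lt ∧ WellFounded lt ∧
  ∀ g : G, ∀ a : A, ∃ w : List A, w.length ≤ k ∧ eval ρ w = ρ a ∧
    ∀ e' : G × A, EdgeOnPath ρ g w e' → IsDegenerate ρ ι C e' ∨ lt e' (g, a)

/-- The pair `(G, A)` is stackable. -/
def IsStackable (ρ : A → G) (ι : A → A) : Prop :=
  ∃ (C : Set (List A)) (lt : G × A → G × A → Prop) (k : ℕ),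
    IsStackableStructure ρ ι C lt k

/-- A stacking map for a stackable structure. -/
def IsStackingMap (ρ : A → G) (ι : A → A) (C : Set (List A))
    (lt : G × A → G × A → Prop) (k : ℕ) (Φ : G × A → List A) : Prop :=
  ∀ e : G × A, IsRecursive ρ ι C e →
    eval ρ (Φ e) = ρ e.2 ∧ (Φ e).length ≤ k ∧
    ∀ e' : G × A, EdgeOnPath ρ e.1 (Φ e) e' → IsDegenerate ρ ι C e' ∨ lt e' e

/-- A stacking map extended by `Φ (g, a) = [a]` on degenerate edges. -/
def IsExtendedStackingMap (ρ : A → G) (ι : A → A) (C : Set (List A))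
    (lt : G × A → G × A → Prop) (k : ℕ) (Φ : G × A → List A) : Prop :=
  (∀ e : G × A, IsDegenerate ρ ι C e → Φ e = [e.2]) ∧ IsStackingMap ρ ι C lt k Φ

/-- A word is freely reduced if no letter is followed by its formal inverse. -/
def FreelyReduced (ι : A → A) (w : List A) : Prop :=
  List.Chain' (fun a b => b ≠ ι a) w


/-- A property propagating along every edge of a path propagates along the path. -/
theorem path_propagate {G : Type*} [Group G] {A : Type*} (ρ : A → G) (P : G → Prop)
    (w : List A) : ∀ g : G,
    (∀ e : G × A, EdgeOnPath ρ g w e → P e.1 → P (e.1 * ρ e.2)) →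
    P g → P (g * eval ρ w) := by
  induction w with
  | nil => intro g _ hg; simpa [eval] using hg
  | cons a w ih =>
    intro g h hg
    have h0 : P (g * ρ a) := by
      refine h (g, a) ⟨⟨0, by simp⟩, by simp [eval]⟩ hg
    have h1 := ih (g * ρ a) (by
      rintro e ⟨i, rfl⟩
      exact h _ ⟨i.succ, by simp [eval, mul_assoc]⟩) h0
    simpa [eval, mul_assoc] using h1

/-- the normal form set of a stackable structure is closed under prefixes. -/
theorem normalForms_prefix_closed_of_stackable {G : Type*} [Group G] {A : Type*} [Fintype A]
    (ρ : A → G) (ι : A → A)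
    (hgen : Subgroup.closure (Set.range ρ) = ⊤)
    (hne : ∀ a : A, ρ a ≠ 1)
    (hinv : Function.Involutive ι)
    (hρι : ∀ a : A, ρ (ι a) = (ρ a)⁻¹)
    (C : Set (List A)) (lt : G × A → G × A → Prop) (k : ℕ)
    (hstk : IsStackableStructure ρ ι C lt k) :
    ∀ w ∈ C, ∀ p : List A, p <+: w → p ∈ C := by
  obtain ⟨hnil, hnf, -, -, hwf, hpath⟩ := hstk
  let P : G → Prop := fun g => ∀ y ∈ C, eval ρ y = g → ∀ p : List A, p <+: y → p ∈ C
  have huniq : ∀ y ∈ C, ∀ z ∈ C, eval ρ y = eval ρ z → y = z := fun y hy z hz h =>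
    (hnf (eval ρ z)).unique ⟨hy, h⟩ ⟨hz, rfl⟩
  have hdeg : ∀ e : G × A, IsDegenerate ρ ι C e → P e.1 → P (e.1 * ρ e.2) := by
    rintro e ⟨y₁, y₂, h1, e1, h2, e2, h⟩ hP y hy hye p hp
    obtain rfl := huniq y hy y₂ h2 (hye.trans e2.symm)
    rcases h with h | h
    · rw [← h, List.prefix_concat_iff] at hp
      rcases hp with rfl | hp
      · exact h ▸ hy
      · exact hP y₁ h1 e1 p hp
    · exact hP y₁ h1 e1 p (h ▸ hp.trans (List.prefix_append _ _))
  have hedge : ∀ e : G × A, P e.1 → P (e.1 * ρ e.2) := by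
    intro e
    induction e using hwf.induction with
    | _ e ih =>
      intro hP
      obtain ⟨v, -, hv, hall⟩ := hpath e.1 e.2
      rw [← hv]
      refine path_propagate ρ P v e.1 (fun e' he' => ?_) hP
      rcases hall e' he' with hd | hl
      · exact hdeg e' hd
      · exact ih e' hl
  have h1 : P 1 := by
    intro y hy hye p hp
    obtain rfl := huniq y hy [] hnil (by simpa [eval] using hye)
    rw [List.prefix_nil] at hp
    exact hp ▸ hnil
  intro w hw p hp
  have := path_propagate ρ P w 1 (fun e _ => hedge e) h1
  exact this w hw (one_mul _).symm p hp

end Stk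
end

section
/- Suppose the pair (G, A) is stackable with normal form set C containing the empty word. Then a word w = a₁⋯aₙ ∈ List A lies in C if and only if w is freely reduced and, for each 1 ≤ i ≤ n, the edge (π(a₁⋯a_{i−1}), a_i) is degenerate with respect to C. -/
namespace Stk

variable {G : Type*} [Group G] {A : Type*}

theorem eval_append (ρ : A → G) (u v : List A) : eval ρ (u ++ v) = eval ρ u * eval ρ v := by
  simp [eval]

theorem eval_singleton (ρ : A → G) (a : A) : eval ρ [a] = ρ a := by
  simp [eval]

theorem nf_unique {ρ : A → G} {C : Set (List A)} (h : IsNormalFormSet ρ C) {u v : List A}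
    (hu : u ∈ C) (hv : v ∈ C) (he : eval ρ u = eval ρ v) : u = v :=
  (h (eval ρ v)).unique ⟨hu, he⟩ ⟨hv, rfl⟩

/-- The normal form of `g` has all its prefixes in `C`. -/
def PrefixGood (ρ : A → G) (C : Set (List A)) (g : G) : Prop :=
  ∀ y ∈ C, eval ρ y = g → ∀ u, u <+: y → u ∈ C

theorem good_of_degenerate {ρ : A → G} {ι : A → A} {C : Set (List A)}
    (h : IsNormalFormSet ρ C) {e : G × A} (hd : IsDegenerate ρ ι C e)
    (hg : PrefixGood ρ C e.1) : PrefixGood ρ C (e.1 * ρ e.2) := by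
  obtain ⟨y₁, y₂, h1, e1, h2, e2, hor⟩ := hd
  intro y hy hye u hu
  obtain rfl : y = y₂ := nf_unique h hy h2 (hye.trans e2.symm)
  rcases hor with rfl | rfl
  · rcases List.prefix_concat_iff.1 hu with rfl | hu
    · exact h2
    · exact hg _ h1 e1 _ hu
  · exact hg _ h1 e1 _ (hu.trans (List.prefix_append _ _))

theorem good_of_path {ρ : A → G} {C : Set (List A)} (g : G) (w : List A)
    (h : ∀ e, EdgeOnPath ρ g w e → PrefixGood ρ C e.1 → PrefixGood ρ C (e.1 * ρ e.2))
    (hg : PrefixGood ρ C g) : PrefixGood ρ C (g * eval ρ w) := by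
  have key : ∀ n, n ≤ w.length → PrefixGood ρ C (g * eval ρ (w.take n)) := by
    intro n
    induction n with
    | zero => intro _; simpa [eval] using hg
    | succ n ih =>
      intro hn
      have := h _ ⟨⟨n, hn⟩, rfl⟩ (ih (by omega))
      rw [List.take_succ_eq_append_getElem hn, eval_append, eval_singleton, ← mul_assoc]
      exact this
  simpa using key w.length le_rfl

theorem good_all {ρ : A → G} {ι : A → A} {C : Set (List A)}
    {lt : G × A → G × A → Prop} {k : ℕ}
    (hgen : Subgroup.closure (Set.range ρ) = ⊤)
    (hρι : ∀ a : A, ρ (ι a) = (ρ a)⁻¹)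
    (hstk : IsStackableStructure ρ ι C lt k) (g : G) : PrefixGood ρ C g := by
  obtain ⟨hnil, hnf, -, -, hwf, hst⟩ := hstk
  have step : ∀ e : G × A, PrefixGood ρ C e.1 → PrefixGood ρ C (e.1 * ρ e.2) := by
    intro e
    induction e using hwf.induction with
    | _ e ih =>
      intro hg
      obtain ⟨w, -, hw, hp⟩ := hst e.1 e.2
      rw [← hw]
      refine good_of_path _ _ (fun e' he' hg' => ?_) hg
      rcases hp e' he' with hd | hl
      · exact good_of_degenerate hnf hd hg'
      · exact ih e' hl hg'
  have hmem : g ∈ Subgroup.closure (Set.range ρ) := by rw [hgen]; trivial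
  induction hmem using Subgroup.closure_induction_right with
  | one =>
    intro y hy hye u hu
    obtain rfl : y = [] := nf_unique hnf hy hnil (by simpa [eval] using hye)
    rw [List.prefix_nil.1 hu]
    exact hnil
  | mul_right x hx y hy ih =>
    obtain ⟨a, rfl⟩ := hy
    exact step (x, a) ih
  | mul_inv_cancel x hx y hy ih =>
    obtain ⟨a, rfl⟩ := hy
    rw [← hρι]
    exact step (x, ι a) ih

/-- a word lies in the normal form set of a stackable structure iff it is
freely reduced and all edges along its path from the identity are degenerate. -/
theorem mem_normalForms_iff_of_stackable {G : Type*} [Group G] {A : Type*} [Fintype A]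
    (ρ : A → G) (ι : A → A)
    (hgen : Subgroup.closure (Set.range ρ) = ⊤)
    (hne : ∀ a : A, ρ a ≠ 1)
    (hinv : Function.Involutive ι)
    (hρι : ∀ a : A, ρ (ι a) = (ρ a)⁻¹)
    (C : Set (List A)) (lt : G × A → G × A → Prop) (k : ℕ)
    (hstk : IsStackableStructure ρ ι C lt k) :
    ∀ w : List A, w ∈ C ↔
      (FreelyReduced ι w ∧
        ∀ i : Fin w.length, IsDegenerate ρ ι C (eval ρ (w.take i), w.get i)) := by
  have hnf := hstk.2.1
  have hpre : ∀ y ∈ C, ∀ u, u <+: y → u ∈ C := fun y hy u hu =>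
    good_all hgen hρι hstk _ y hy rfl u hu
  intro w
  constructor
  · intro hw
    constructor
    · unfold FreelyReduced
      induction w using List.reverseRecOn with
      | nil => exact List.isChain_nil
      | append_singleton u a ih =>
        have hu : u ∈ C := hpre _ hw _ (List.prefix_append _ _)
        refine List.isChain_append.2 ⟨ih hu, List.isChain_singleton _, ?_⟩
        intro x hx y hy hxy
        obtain ⟨v, rfl⟩ : ∃ v, u = v ++ [x] := by
          obtain ⟨hne', hl⟩ := List.mem_getLast?_eq_getLast hx
          exact ⟨u.dropLast, by rw [hl]; exact (List.dropLast_append_getLast hne').symm⟩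
        have hv : v ∈ C := hpre _ hu _ (List.prefix_append _ _)
        simp only [List.head?_cons, Option.mem_def, Option.some.injEq] at hy
        subst hy
        have := nf_unique hnf hv hw (by simp [eval, hxy, hρι])
        have := congrArg List.length this
        simp at this
    · intro i
      refine ⟨w.take i, w.take (i + 1), hpre _ hw _ (List.take_prefix _ _), rfl,
        hpre _ hw _ (List.take_prefix _ _), ?_, Or.inl ?_⟩
      · rw [List.take_succ_eq_append_getElem i.2, eval_append, eval_singleton]; rfl
      · rw [List.take_succ_eq_append_getElem i.2]; rfl
  · induction w using List.reverseRecOn with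
    | nil => intro _; exact hstk.1
    | append_singleton u a ih =>
      rintro ⟨hf, hd⟩
      have hf' := List.isChain_append.1 hf
      have hu : u ∈ C := by
        refine ih ⟨hf'.1, fun i => ?_⟩
        have := hd ⟨i, by simp⟩
        simpa [List.take_append_of_le_length i.2.le, List.getElem_append_left i.2] using this
      have hl := hd ⟨u.length, by simp⟩
      simp only [List.take_left, List.get_eq_getElem, List.getElem_concat_length] at hl
      obtain ⟨y₁, y₂, h1, e1, h2, e2, hor⟩ := hl
      obtain rfl : y₁ = u := nf_unique hnf h1 hu e1
      rcases hor with h | h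
      · simp only at h
        rw [h]; exact h2
      · exfalso
        simp only at h
        refine hf'.2.2 (ι a) (by rw [h]; simp) a (by simp) (hinv a).symm

end Stk
end

section
/- The pair (G, A) is stackable if and only if there exist a prefix-closed normal form set C ⊆ List A containing the empty word and a bounded flow function with respect to C. -/
namespace Stk

variable {G : Type*} [Group G] {A : Type*}

/-- `C` is closed under taking prefixes. -/
def PrefixClosed (C : Set (List A)) : Prop :=
  ∀ w ∈ C, ∀ p : List A, p <+: w → p ∈ C

/-- A flow function with respect to a prefix-closed normal form set `C`:
(F1) `Φ (g, a)` evaluates to `ρ a`; (F2d) `Φ` is the identity on degenerate edges;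
(F2r) the transitive closure of the induced relation on recursive edges is a
well-founded strict partial order. -/
def IsFlowFunction (ρ : A → G) (ι : A → A) (C : Set (List A))
    (Φ : G × A → List A) : Prop :=
  (∀ e : G × A, eval ρ (Φ e) = ρ e.2) ∧
  (∀ e : G × A, IsDegenerate ρ ι C e → Φ e = [e.2]) ∧
  WellFounded (Relation.TransGen (fun e' e : G × A =>
    IsRecursive ρ ι C e ∧ IsRecursive ρ ι C e' ∧ EdgeOnPath ρ e.1 (Φ e) e'))

/-- A property of vertices invariant along every edge of a path is invariant along the path. -/
lemma path_iff {G : Type*} [Group G] {A : Type*} (ρ : A → G) (P : G → Prop) (w : List A) :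
    ∀ g : G, (∀ e : G × A, EdgeOnPath ρ g w e → (P e.1 ↔ P (e.1 * ρ e.2))) →
      (P g ↔ P (g * eval ρ w)) := by
  induction w with
  | nil => intro g _; simp [eval]
  | cons a w ih =>
    intro g h
    have h0 := h (g, a) ⟨⟨0, by simp⟩, by simp [eval]⟩
    have h1 := ih (g * ρ a) (by
      rintro e ⟨i, rfl⟩
      exact h _ ⟨⟨i.1 + 1, by simp⟩, by simp [eval, mul_assoc]⟩)
    have h2 : g * eval ρ (a :: w) = g * ρ a * eval ρ w := by simp [eval, mul_assoc]
    rw [h2]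
    exact h0.trans h1

/-- Along a degenerate edge, one normal form has all prefixes in `C` iff the other does. -/
lemma degenerate_iff {G : Type*} [Group G] {A : Type*} (ρ : A → G) (ι : A → A)
    (C : Set (List A)) (hC : IsNormalFormSet ρ C) (e : G × A) (he : IsDegenerate ρ ι C e) :
    (∀ w ∈ C, eval ρ w = e.1 → ∀ p : List A, p <+: w → p ∈ C) ↔
    (∀ w ∈ C, eval ρ w = e.1 * ρ e.2 → ∀ p : List A, p <+: w → p ∈ C) := by
  obtain ⟨y₁, y₂, h1, e1, h2, e2, h⟩ := he
  have u1 : ∀ w ∈ C, eval ρ w = e.1 → w = y₁ := fun w hw hwe =>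
    (hC e.1).unique ⟨hw, hwe⟩ ⟨h1, e1⟩
  have u2 : ∀ w ∈ C, eval ρ w = e.1 * ρ e.2 → w = y₂ := fun w hw hwe =>
    (hC _).unique ⟨hw, hwe⟩ ⟨h2, e2⟩
  constructor
  · intro H w hw hwe p hp
    obtain rfl := u2 w hw hwe
    rcases h with h | h
    · rw [← h, List.prefix_concat_iff] at hp
      rcases hp with hp | hp
      · rw [hp, h]; exact h2
      · exact H y₁ h1 e1 p hp
    · exact H y₁ h1 e1 p (h ▸ hp.trans (List.prefix_append _ _))
  · intro H w hw hwe p hp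
    obtain rfl := u1 w hw hwe
    rcases h with h | h
    · exact H y₂ h2 e2 p (h ▸ hp.trans (List.prefix_append _ _))
    · rw [h, List.prefix_concat_iff] at hp
      rcases hp with hp | hp
      · rw [hp, ← h]; exact h1
      · exact H y₂ h2 e2 p hp

/-- The normal form set of a stackable structure is automatically prefix-closed. -/
lemma prefixClosed_of_stackable {G : Type*} [Group G] {A : Type*} (ρ : A → G) (ι : A → A)
    (hgen : Subgroup.closure (Set.range ρ) = ⊤) (C : Set (List A))
    (lt : G × A → G × A → Prop) (k : ℕ) (h : IsStackableStructure ρ ι C lt k) :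
    PrefixClosed C := by
  obtain ⟨hnil, hC, -, -, hwf, hst⟩ := h
  let P : G → Prop := fun g => ∀ w ∈ C, eval ρ w = g → ∀ p : List A, p <+: w → p ∈ C
  have hedge : ∀ e : G × A, P e.1 ↔ P (e.1 * ρ e.2) := by
    intro e
    induction e using hwf.induction with
    | _ e ih =>
      obtain ⟨w, -, hw, hp⟩ := hst e.1 e.2
      rw [← hw]
      apply path_iff ρ P w e.1
      intro e' he'
      rcases hp e' he' with hd | hl
      · exact degenerate_iff ρ ι C hC e' hd
      · exact ih e' hl
  have hall : ∀ x ∈ Subgroup.closure (Set.range ρ), ∀ g, P g ↔ P (g * x) := by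
    intro x hx
    induction hx using Subgroup.closure_induction with
    | mem x hx => obtain ⟨a, rfl⟩ := hx; exact fun g => hedge (g, a)
    | one => simp
    | mul x y _ _ hx hy => intro g; rw [← mul_assoc]; exact (hx g).trans (hy _)
    | inv x _ hx => intro g; have := hx (g * x⁻¹); simpa using this.symm
  have h1 : P 1 := by
    intro w hw hwe p hp
    have : w = [] := (hC 1).unique ⟨hw, hwe⟩ ⟨hnil, by simp [eval]⟩
    subst this
    rw [List.prefix_nil.mp hp]; exact hnil
  intro w hw p hp
  have := (hall (eval ρ w) (by simp [hgen]) 1).mp h1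
  rw [one_mul] at this
  exact this w hw rfl p hp

/-- `(G, A)` is stackable iff there are a prefix-closed normal form set
containing the empty word and a bounded flow function with respect to it. -/
theorem isStackable_iff_exists_bounded_flowFunction {G : Type*} [Group G] {A : Type*}
    [Fintype A]
    (ρ : A → G) (ι : A → A)
    (hgen : Subgroup.closure (Set.range ρ) = ⊤)
    (hne : ∀ a : A, ρ a ≠ 1)
    (hinv : Function.Involutive ι)
    (hρι : ∀ a : A, ρ (ι a) = (ρ a)⁻¹) :
    IsStackable ρ ι ↔
      ∃ (C : Set (List A)) (Φ : G × A → List A) (k : ℕ),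
        ([] : List A) ∈ C ∧ IsNormalFormSet ρ C ∧ PrefixClosed C ∧
        IsFlowFunction ρ ι C Φ ∧ ∀ e : G × A, (Φ e).length ≤ k := by
  classical
  constructor
  · rintro ⟨C, lt, k, h⟩
    have hpc := prefixClosed_of_stackable ρ ι hgen C lt k h
    obtain ⟨hnil, hC, hrec, htr, hwf, hst⟩ := h
    choose W hlen hev hpath using hst
    refine ⟨C, fun e => if IsDegenerate ρ ι C e then [e.2] else W e.1 e.2, max k 1,
      hnil, hC, hpc, ⟨?_, ?_, ?_⟩, ?_⟩
    · intro e
      dsimp only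
      split_ifs
      · simp [eval]
      · exact hev _ _
    · intro e he
      simp [he]
    · apply WellFounded.transGen
      refine Subrelation.wf ?_ hwf
      rintro e' e ⟨h1, h2, h3⟩
      have h1' : ¬ IsDegenerate ρ ι C e := h1
      simp only [if_neg h1'] at h3
      exact (hpath e.1 e.2 e' h3).resolve_left h2
    · intro e
      dsimp only
      split_ifs
      · simp
      · exact (hlen _ _).trans (le_max_left _ _)
  · rintro ⟨C, Φ, k, hnil, hC, -, ⟨hF1, hFd, hFr⟩, hk⟩
    refine ⟨C, _, k, hnil, hC, ?_, ?_, hFr, ?_⟩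
    · intro e e' h
      constructor
      · obtain ⟨c, hc, -⟩ := Relation.TransGen.head'_iff.mp h
        exact hc.2.1
      · obtain ⟨c, -, hc⟩ := Relation.TransGen.tail'_iff.mp h
        exact hc.1
    · exact fun _ _ _ h1 h2 => Relation.TransGen.trans h1 h2
    · intro g a
      refine ⟨Φ (g, a), hk _, hF1 _, ?_⟩
      intro e' he'
      by_cases hd : IsDegenerate ρ ι C e'
      · exact Or.inl hd
      · refine Or.inr (Relation.TransGen.single ⟨?_, hd, he'⟩)
        intro hda
        apply hd
        rw [hFd _ hda] at he'
        obtain ⟨i, rfl⟩ := he'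
        have hi : i.1 = 0 := by have := i.2; simp only [List.length_singleton] at this; omega
        simpa [hi, eval] using hda

end Stk
end

section
/- If G is algorithmically stackable over A, then the word problem for G over A is decidable: the predicate on List A given by (fun w => π(w) = 1) is a computable predicate (ComputablePred). -/
namespace Stk

variable {G : Type*} [Group G] {A : Type*}

/-- The canonical `Primcodable` encoding of a finite type with decidable equality. -/
noncomputable instance (priority := 100) primcodableOfFintype {B : Type*} [Fintype B] [DecidableEq B] :
    Primcodable B :=
  Primcodable.ofEquiv (Fin (Fintype.card B)) (Fintype.equivFin B)

/-- A total function whose values can be found by a computable unbounded search is computable. -/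
theorem computable_of_search {α σ : Type*} [Primcodable α] [Primcodable σ]
    (f : α → ℕ → Option σ) (hf : Computable₂ f) (g : α → σ)
    (hex : ∀ a, ∃ n s, f a n = some s) (hg : ∀ a n s, f a n = some s → s = g a) :
    Computable g := by
  refine (Partrec.rfindOpt hf).of_eq_tot fun a => ?_
  have hd : (Nat.rfindOpt (f a)).Dom := Nat.rfindOpt_dom.2 (hex a)
  obtain ⟨n, hn⟩ := Nat.rfindOpt_spec ⟨hd, rfl⟩
  have := hg a n _ hn
  rw [← this]
  exact ⟨hd, rfl⟩

theorem eq_computable {α : Type*} [Primcodable α] [DecidableEq α] :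
    Computable fun x : α × α => decide (x.1 = x.2) :=
  (Primrec.eq (α := α)).decide.to_comp

theorem eq_const_computable {α : Type*} [Primcodable α] [DecidableEq α] (a : α) :
    Computable fun x : α => decide (x = a) :=
  eq_computable.comp (Computable.id.pair (Computable.const a))

/-- One step of the normal form algorithm: the state is the (reversed) normal form of the part
already read, together with the part that remains to be read. -/
def step [DecidableEq A] (ι : A → A) (F : List A × A → List A) (s : List A × List A) :
    List A × List A :=
  Option.casesOn s.2.head? s (fun a =>
    bif decide (s.1.head? = some (ι a)) then (s.1.tail, s.2.tail)
    else bif decide (F (s.1.reverse, a) = [a]) then (a :: s.1, s.2.tail)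
    else (s.1, F (s.1.reverse, a) ++ s.2.tail))

theorem step_computable [Primcodable A] [DecidableEq A] (ι : A → A) (hι : Computable ι)
    (F : List A × A → List A) (hF : Computable F) : Computable (step ι F) := by
  have h1 : Computable fun x : (List A × List A) × A => x.1.1 := Computable.fst.comp Computable.fst
  have h2 : Computable fun x : (List A × List A) × A => x.1.2 := Computable.snd.comp Computable.fst
  have ht : Computable fun x : (List A × List A) × A => x.1.2.tail :=
    Primrec.list_tail.to_comp.comp h2
  have hz : Computable fun x : (List A × List A) × A => F (x.1.1.reverse, x.2) :=
    hF.comp ((Computable.list_reverse.comp h1).pair Computable.snd)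
  have eqO : Computable fun x : Option A × Option A => decide (x.1 = x.2) :=
    eq_computable
  have eqL : Computable fun x : List A × List A => decide (x.1 = x.2) :=
    eq_computable
  have c1 : Computable fun x : (List A × List A) × A =>
      decide (x.1.1.head? = some (ι x.2)) :=
    eqO.comp ((Primrec.list_head?.to_comp.comp h1).pair
      (Computable.option_some.comp (hι.comp Computable.snd)))
  have b1 : Computable fun x : (List A × List A) × A => (x.1.1.tail, x.1.2.tail) :=
    (Primrec.list_tail.to_comp.comp h1).pair ht
  have c2 : Computable fun x : (List A × List A) × A =>
      decide (F (x.1.1.reverse, x.2) = [x.2]) :=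
    eqL.comp (hz.pair (Computable.list_cons.comp Computable.snd (Computable.const [])))
  have b2 : Computable fun x : (List A × List A) × A => (x.2 :: x.1.1, x.1.2.tail) :=
    (Computable.list_cons.comp Computable.snd h1).pair ht
  have b3 : Computable fun x : (List A × List A) × A =>
      (x.1.1, F (x.1.1.reverse, x.2) ++ x.1.2.tail) :=
    h1.pair (Computable.list_append.comp hz ht)
  have hb := Computable.cond c1 b1 (Computable.cond c2 b2 b3)
  have ho : Computable fun s : List A × List A => s.2.head? :=
    Primrec.list_head?.to_comp.comp Computable.snd
  have hb2 : Computable₂ fun (s : List A × List A) (a : A) =>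
      bif decide (s.1.head? = some (ι a)) then (s.1.tail, s.2.tail)
      else bif decide (F (s.1.reverse, a) = [a]) then (a :: s.1, s.2.tail)
      else (s.1, F (s.1.reverse, a) ++ s.2.tail) := hb
  exact Computable.option_casesOn ho Computable.id hb2

/-- Iterating a computable function is computable. -/
theorem iter_computable {α σ : Type*} [Primcodable α] [Primcodable σ] {f : σ → σ}
    (hf : Computable f) {g : α → σ} (hg : Computable g) :
    Computable fun x : α × ℕ => f^[x.2] (g x.1) := by
  refine (Computable.nat_rec (f := fun x : α × ℕ => x.2) (g := fun x => g x.1)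
    (h := fun _ y => f y.2) Computable.snd (hg.comp Computable.fst)
    (hf.comp (Computable.snd.comp Computable.snd)).to₂).of_eq fun x => ?_
  obtain ⟨s, n⟩ := x
  induction n with
  | zero => rfl
  | succ n ih =>
    rw [Function.iterate_succ_apply']
    exact congrArg f ih

theorem eval_cons (ρ : A → G) (a : A) (v : List A) : eval ρ (a :: v) = ρ a * eval ρ v := by
  simp [eval]

theorem eval_nil (ρ : A → G) : eval ρ ([] : List A) = 1 := rfl

/-- All suffixes of the reversed word are reversed normal forms. -/
def Good (C : Set (List A)) (r : List A) : Prop := ∀ p, p <:+ r → p.reverse ∈ C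

/-- Reachability under iteration. -/
def Reach {σ : Type*} (f : σ → σ) (s t : σ) : Prop := ∃ n, f^[n] s = t

theorem Reach.trans {σ : Type*} {f : σ → σ} {s t u : σ} (h : Reach f s t) (h' : Reach f t u) :
    Reach f s u := by
  obtain ⟨n, rfl⟩ := h
  obtain ⟨m, rfl⟩ := h'
  exact ⟨m + n, Function.iterate_add_apply f m n s⟩

theorem Reach.single {σ : Type*} {f : σ → σ} {s t : σ} (h : f s = t) : Reach f s t := ⟨1, h⟩

/-- The edge `e` can be processed by the algorithm. -/
def Proc (ρ : A → G) (C : Set (List A)) (f : List A × List A → List A × List A)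
    (e : G × A) : Prop :=
  ∀ r v, Good C r → eval ρ r.reverse = e.1 →
    ∃ r', Good C r' ∧ eval ρ r'.reverse = e.1 * ρ e.2 ∧ Reach f (r, e.2 :: v) (r', v)

theorem proc_path (ρ : A → G) (C : Set (List A)) (f : List A × List A → List A × List A)
    (w : List A) : ∀ (g : G), (∀ e, EdgeOnPath ρ g w e → Proc ρ C f e) →
    ∀ r v, Good C r → eval ρ r.reverse = g →
      ∃ r', Good C r' ∧ eval ρ r'.reverse = g * eval ρ w ∧ Reach f (r, w ++ v) (r', v) := by
  induction w with
  | nil =>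
    intro g _ r v hr hg
    exact ⟨r, hr, by simp [eval_nil, hg], 0, rfl⟩
  | cons a w ih =>
    intro g h r v hr hg
    have h0 : Proc ρ C f (g, a) := h _ ⟨⟨0, by simp⟩, by simp [eval_nil]⟩
    obtain ⟨r1, hr1, hg1, hR1⟩ := h0 r (w ++ v) hr hg
    obtain ⟨r2, hr2, hg2, hR2⟩ := ih (g * ρ a) (by
      rintro e ⟨⟨i, hi⟩, rfl⟩
      refine h _ ⟨⟨i + 1, by simpa using hi⟩, ?_⟩
      simp [eval_cons, mul_assoc]) r1 v hr1 hg1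
    exact ⟨r2, hr2, by rw [hg2, eval_cons, mul_assoc], hR1.trans hR2⟩

theorem proc_all [DecidableEq A] (ρ : A → G) (ι : A → A)
    (hρι : ∀ a : A, ρ (ι a) = (ρ a)⁻¹)
    (C : Set (List A)) (lt : G × A → G × A → Prop) (k : ℕ)
    (hstk : IsStackableStructure ρ ι C lt k)
    (Φ : G × A → List A) (hΦ : IsExtendedStackingMap ρ ι C lt k Φ) (e : G × A) :
    Proc ρ C (step ι fun x => Φ (eval ρ x.1, x.2)) e := by
  obtain ⟨hnil, hnf, -, -, hwf, -⟩ := hstk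
  -- a good word ending in `ι a` is shortened
  have hdrop : ∀ (a : A) r v, Good C r → r.head? = some (ι a) →
      ∃ r', Good C r' ∧ eval ρ r'.reverse = eval ρ r.reverse * ρ a ∧
        Reach (step ι fun x => Φ (eval ρ x.1, x.2)) (r, a :: v) (r', v) := by
    intro a r v hr hh
    cases r with
    | nil => simp at hh
    | cons b r =>
      simp only [List.head?_cons, Option.some.injEq] at hh
      subst hh
      refine ⟨r, fun p hp => hr p (hp.trans (List.suffix_cons _ _)), ?_, Reach.single ?_⟩
      · simp [eval_append, eval_cons, eval_nil, hρι]
      · simp [step]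
  have hdeg : ∀ e, IsDegenerate ρ ι C e →
      Proc ρ C (step ι fun x => Φ (eval ρ x.1, x.2)) e := by
    rintro ⟨g, a⟩ hd r v hr hg
    simp only at hg
    subst hg
    by_cases hh : r.head? = some (ι a)
    · exact hdrop a r v hr hh
    · have hΦa := hΦ.1 _ hd
      obtain ⟨y₁, y₂, hy1, he1, hy2, he2, hor⟩ := hd
      simp only at he1 he2 hor hΦa
      have hy : y₁ = r.reverse :=
        (hnf (eval ρ r.reverse)).unique ⟨hy1, he1⟩ ⟨hr r List.suffix_rfl, rfl⟩
      subst hy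
      have hy2' : (a :: r).reverse = y₂ := by
        rcases hor with h | h
        · simpa using h
        · exfalso
          apply hh
          rw [List.reverse_eq_iff] at h
          rw [h]; simp
      refine ⟨a :: r, ?_, ?_, Reach.single ?_⟩
      · intro p hp
        rcases List.suffix_cons_iff.1 hp with h | h
        · rw [h, hy2']; exact hy2
        · exact hr p h
      · rw [hy2', he2]
      · simp [step, hh, hΦa]
  induction e using hwf.induction with
  | _ e ih =>
    by_cases hd : IsDegenerate ρ ι C e
    · exact hdeg e hd
    · obtain ⟨g, a⟩ := e
      intro r v hr hg
      simp only at hg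
      subst hg
      by_cases hh : r.head? = some (ι a)
      · exact hdrop a r v hr hh
      obtain ⟨hev, -, hpath⟩ := hΦ.2 _ hd
      have hne : Φ (eval ρ r.reverse, a) ≠ [a] := by
        intro h
        have := hpath (eval ρ r.reverse, a) ⟨⟨0, by simp [h]⟩, by simp [h, eval_nil]⟩
        rcases this with h' | h'
        · exact hd h'
        · exact hwf.irrefl.irrefl _ h'
      obtain ⟨r', hr', hg', hR⟩ := proc_path ρ C _ (Φ (eval ρ r.reverse, a)) (eval ρ r.reverse)
        (fun e' he' => (hpath e' he').elim (hdeg e') (ih e')) r v hr rfl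
      refine ⟨r', hr', by rw [hg', hev], Reach.trans (Reach.single ?_) hR⟩
      simp [step, hh, hne]

/-- A function of two variables whose graph is decidable is computable. -/
theorem computable_of_graph {α β γ : Type*} [Primcodable α] [Primcodable β] [Primcodable γ]
    (g : α × β → γ) (hS : ComputablePred fun x : α × β × γ => x.2.2 = g (x.1, x.2.1)) :
    Computable g := by
  classical
  have hS' := hS.decide
  have hc : Computable fun p : (α × β) × γ => decide (p.2 = g p.1) :=
    hS'.comp ((Computable.fst.comp Computable.fst).pair
      ((Computable.snd.comp Computable.fst).pair Computable.snd))
  refine computable_of_search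
    (fun x n => (Encodable.decode (α := γ) n).bind fun z =>
      bif decide (z = g x) then some z else none) ?_ _ ?_ ?_
  · exact Computable.bind_decode_iff.2 (Computable.cond hc
      (Computable.option_some.comp Computable.snd) (Computable.const none)).to₂
  · intro x
    exact ⟨Encodable.encode (g x), g x, by simp⟩
  · intro x n s h
    obtain ⟨z, -, hz⟩ := Option.bind_eq_some_iff.1 h
    by_cases hc : z = g x
    · simp only [hc, decide_true, cond_true, Option.some.injEq] at hz
      exact hz.symm
    · simp [hc] at hz

/-- Halting computations of a computable step function decide a predicate. -/
theorem decide_of_run [Primcodable A] [DecidableEq A]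
    (f : List A × List A → List A × List A) (hfc : Computable f) (P : List A → Prop)
    (hdone : ∀ m r, f^[m] (r, []) = (r, []))
    (hrun : ∀ w, ∃ n r, f^[n] ([], w) = (r, []) ∧ (r = [] ↔ P w)) : ComputablePred P := by
  classical
  have eqL : Computable fun x : List A => decide (x = []) :=
    eq_const_computable []
  apply Computable.computablePred
  have hin : Computable fun w : List A => (([] : List A), w) :=
    (Computable.const []).pair Computable.id
  have hit : Computable fun x : List A × ℕ => f^[x.2] ([], x.1) :=
    iter_computable (α := List A) hfc hin
  have d1 : Computable fun x : List A × ℕ => decide ((f^[x.2] ([], x.1)).2 = []) :=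
    eqL.comp (Computable.snd.comp hit)
  have d2 : Computable fun x : List A × ℕ => some (decide ((f^[x.2] ([], x.1)).1 = [])) :=
    Computable.option_some.comp (eqL.comp (Computable.fst.comp hit))
  have hcond := Computable.cond d1 d2 (Computable.const none)
  have hcond2 : Computable₂ fun (w : List A) (n : ℕ) =>
      bif decide ((f^[n] ([], w)).2 = []) then
      some (decide ((f^[n] ([], w)).1 = [])) else none := hcond
  refine computable_of_search
    (fun w n => bif decide ((f^[n] ([], w)).2 = []) then
      some (decide ((f^[n] ([], w)).1 = [])) else none) ?_ _ ?_ ?_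
  · exact hcond2
  · intro w
    obtain ⟨n, r, hn, -⟩ := hrun w
    exact ⟨n, decide (r = []), by simp [hn]⟩
  · intro w m s h
    obtain ⟨n, r, hn, hiff⟩ := hrun w
    by_cases hc : (f^[m] ([], w)).2 = []
    · have hm : f^[m] ([], w) = ((f^[m] ([], w)).1, []) := Prod.ext rfl hc
      have e1 : f^[n + m] ([], w) = ((f^[m] ([], w)).1, []) := by
        rw [Function.iterate_add_apply, hm, hdone]
      have e2 : f^[n + m] ([], w) = (r, []) := by
        rw [Nat.add_comm, Function.iterate_add_apply, hn, hdone]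
      have e3 : (f^[m] ([], w)).1 = r := by
        have := e1.symm.trans e2
        exact (Prod.mk.inj this).1
      simp only [hc, decide_true, cond_true, Option.some.injEq, e3] at h
      rw [← h]
      exact decide_eq_decide.2 hiff
    · simp [hc] at h

/-- an algorithmically stackable group has decidable word problem. -/
theorem wordProblem_computable_of_algorithmically_stackable {G : Type*} [Group G]
    {A : Type*} [Fintype A] [DecidableEq A]
    (ρ : A → G) (ι : A → A)
    (hgen : Subgroup.closure (Set.range ρ) = ⊤)
    (hne : ∀ a : A, ρ a ≠ 1)
    (hinv : Function.Involutive ι)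
    (hρι : ∀ a : A, ρ (ι a) = (ρ a)⁻¹)
    (C : Set (List A)) (lt : G × A → G × A → Prop) (k : ℕ)
    (hstk : IsStackableStructure ρ ι C lt k)
    (Φ : G × A → List A) (hΦ : IsExtendedStackingMap ρ ι C lt k Φ)
    (hS : ComputablePred (fun x : List A × A × List A => x.2.2 = Φ (eval ρ x.1, x.2.1))) :
    ComputablePred (fun w : List A => eval ρ w = 1) := by
  classical
  -- the stacking map is computable
  have hF : Computable fun x : List A × A => Φ (eval ρ x.1, x.2) :=
    computable_of_graph (fun x : List A × A => Φ (eval ρ x.1, x.2)) hS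
  set f := step ι fun x => Φ (eval ρ x.1, x.2) with hf
  have hfc : Computable f := step_computable ι (Primrec.dom_finite ι).to_comp _ hF
  have hdone : ∀ m r, f^[m] (r, []) = (r, []) := by
    intro m r
    exact Function.iterate_fixed (by simp [hf, step]) m
  -- every run halts
  have hrun : ∀ w, ∃ n r, f^[n] ([], w) = (r, []) ∧ (r = [] ↔ eval ρ w = 1) := by
    intro w
    have hgood : Good C ([] : List A) := by
      intro p hp
      rw [List.suffix_nil.1 hp]
      exact hstk.1
    obtain ⟨r, hr, hg, n, hn⟩ := proc_path ρ C f w 1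
      (fun e _ => proc_all ρ ι hρι C lt k hstk Φ hΦ e) [] [] hgood rfl
    rw [List.append_nil] at hn
    rw [one_mul] at hg
    refine ⟨n, r, hn, ?_, ?_⟩
    · rintro rfl
      rw [← hg]; rfl
    · intro h
      have := (hstk.2.1 1).unique ⟨hr r List.suffix_rfl, hg.trans h⟩ ⟨hstk.1, rfl⟩
      simpa using this
  exact decide_of_run f hfc _ hdone hrun

end Stk
end

section
/- Let G be a group with a minimal finite complete rewriting system (A, R, ρ), where in addition A carries an involution ι : A → A with ρ(ι a) = (ρ a)⁻¹ and ρ a ≠ 1 for all a ∈ A. Then the pair (G, A) is stackable, with normal form set C equal to the set of irreducible words of (A, R). -/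
namespace Stk

variable {G : Type*} [Group G] {A : Type*}

/-- One rewriting step: replace a contiguous occurrence of a left-hand side of a rule by
the corresponding right-hand side. -/
def Rewrites (R : Set (List A × List A)) (w w' : List A) : Prop :=
  ∃ r ∈ R, ∃ x y : List A, w = x ++ r.1 ++ y ∧ w' = x ++ r.2 ++ y

/-- A word is irreducible if it contains no left-hand side of a rule as a contiguous
subword. -/
def RWIrreducible (R : Set (List A × List A)) (w : List A) : Prop :=
  ∀ r ∈ R, ¬ r.1 <:+: w

/-- `(A, R, ρ)` is a finite complete rewriting system for `G`: the rules form a finite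
set of relations of `G`, each group element is represented by exactly one irreducible
word, and there is no infinite sequence of rewritings. -/
def IsCompleteRewritingSystem (ρ : A → G) (R : Set (List A × List A)) : Prop :=
  R.Finite ∧ (∀ r ∈ R, eval ρ r.1 = eval ρ r.2) ∧
  (∀ g : G, ∃! w : List A, RWIrreducible R w ∧ eval ρ w = g) ∧
  WellFounded (fun w' w : List A => Rewrites R w w')

/-- A minimal finite complete rewriting system: right-hand sides and all proper subwords
of left-hand sides are irreducible. -/
def IsMinimalCRS (ρ : A → G) (R : Set (List A × List A)) : Prop :=
  IsCompleteRewritingSystem ρ R ∧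
  ∀ r ∈ R, RWIrreducible R r.2 ∧
    ∀ u : List A, u <:+: r.1 → u ≠ r.1 → RWIrreducible R u

theorem eval_inv (ρ : A → G) (ι : A → A) (hρι : ∀ a : A, ρ (ι a) = (ρ a)⁻¹) (u : List A) :
    eval ρ (u.reverse.map ι) = (eval ρ u)⁻¹ := by
  induction u with
  | nil => simp [eval]
  | cons a u ih =>
    rw [List.reverse_cons, List.map_append, eval_append, ih]
    simp [eval, hρι]

theorem edgeOnPath_split {ρ : A → G} {g : G} {w : List A} {e : G × A}
    (h : EdgeOnPath ρ g w e) :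
    ∃ p b q, w = p ++ b :: q ∧ e = (g * eval ρ p, b) := by
  obtain ⟨i, rfl⟩ := h
  refine ⟨w.take i, w.get i, w.drop (i + 1), ?_, rfl⟩
  simp

theorem edge_append {ρ : A → G} {g : G} {u v p q : List A} {b : A}
    (h : u ++ v = p ++ b :: q) :
    (∃ q', u = p ++ b :: q') ∨ (∃ p', v = p' ++ b :: q ∧ g * eval ρ p =
      g * eval ρ u * eval ρ p') := by
  rw [List.append_eq_append_iff] at h
  rcases h with ⟨a', rfl, h2⟩ | ⟨c', rfl, h2⟩
  · right
    exact ⟨a', h2, by rw [eval_append, mul_assoc]⟩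
  · cases c' with
    | nil =>
      right
      exact ⟨[], by simpa using h2.symm, by simp [eval]⟩
    | cons c c' =>
      left
      simp only [List.cons_append, List.cons.injEq] at h2
      exact ⟨c', by rw [h2.1]⟩

theorem irr_infix {R : Set (List A × List A)} {u w : List A} (h : RWIrreducible R w)
    (hu : u <:+: w) : RWIrreducible R u :=
  fun r hr hru => h r hr (hru.trans hu)

theorem degenerate_back {ρ : A → G} {ι : A → A} (hinv : Function.Involutive ι)
    (hρι : ∀ a : A, ρ (ι a) = (ρ a)⁻¹) {R : Set (List A × List A)} (x u : List A) :
    RWIrreducible R (x ++ u) → ∀ p b q, u.reverse.map ι = p ++ b :: q →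
      IsDegenerate ρ ι {w : List A | RWIrreducible R w} (eval ρ (x ++ u) * eval ρ p, b) := by
  induction u using List.reverseRecOn with
  | nil => intro _ p b q h; simp at h
  | append_singleton u c ih =>
    intro hirr p b q h
    have hirr' : RWIrreducible R (x ++ u) := irr_infix hirr ⟨[], [c], by simp⟩
    rw [List.reverse_append, List.map_append] at h
    cases p with
    | nil =>
      simp at h
      obtain ⟨rfl, -⟩ := h
      refine ⟨x ++ (u ++ [c]), x ++ u, hirr, by simp [eval], hirr', ?_, ?_⟩
      · simp [eval, hρι, mul_assoc]
      · right; simp [hinv c]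
    | cons d p =>
      simp at h
      obtain ⟨rfl, h⟩ := h
      have := ih hirr' p b q (by simpa using h)
      convert this using 2
      simp [eval, hρι, mul_assoc]

theorem rewrites_ctx {R : Set (List A × List A)} (x y : List A) {w w' : List A}
    (h : Rewrites R w w') : Rewrites R (x ++ w ++ y) (x ++ w' ++ y) := by
  obtain ⟨r, hr, a, b, rfl, rfl⟩ := h
  exact ⟨r, hr, x ++ a, b ++ y, by simp, by simp⟩

theorem transGen_ctx {R : Set (List A × List A)} (x y : List A) {w w' : List A}
    (h : Relation.TransGen (Rewrites R) w w') :
    Relation.TransGen (Rewrites R) (x ++ w ++ y) (x ++ w' ++ y) :=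
  Relation.TransGen.lift (fun w => x ++ w ++ y) (fun _ _ h => rewrites_ctx x y h) _ _ h

theorem reflTransGen_ctx {R : Set (List A × List A)} (x y : List A) {w w' : List A}
    (h : Relation.ReflTransGen (Rewrites R) w w') :
    Relation.ReflTransGen (Rewrites R) (x ++ w ++ y) (x ++ w' ++ y) :=
  Relation.ReflTransGen.lift (fun w => x ++ w ++ y) (fun _ _ h => rewrites_ctx x y h) _ _ h

/-- `w` rewrites in at least one step to a word containing `w'`. -/
def Above (R : Set (List A × List A)) (w' w : List A) : Prop :=
  ∃ x z, Relation.TransGen (Rewrites R) w (x ++ w' ++ z)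

theorem above_trans {R : Set (List A × List A)} {a b c : List A} (h1 : Above R a b)
    (h2 : Above R b c) : Above R a c := by
  obtain ⟨x, z, h1⟩ := h1
  obtain ⟨x', z', h2⟩ := h2
  refine ⟨x' ++ x, z ++ z', ?_⟩
  have := h2.trans (transGen_ctx x' z' h1)
  simpa using this

theorem above_wf {R : Set (List A × List A)}
    (hwf : WellFounded (fun w' w : List A => Rewrites R w w')) : WellFounded (Above R) := by
  have key : ∀ W : List A, ∀ p w q, W = p ++ w ++ q → Acc (Above R) w := by
    intro W
    induction W using hwf.transGen.induction with
    | _ W ih =>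
      rintro p w q rfl
      constructor
      rintro w' ⟨x, z, h⟩
      refine ih _ ?_ (p ++ x) w' (z ++ q) rfl
      have := Relation.transGen_swap.2 (transGen_ctx p q h)
      simpa using this
  exact ⟨fun w => key w [] w [] (by simp)⟩

theorem exists_nf {ρ : A → G} {R : Set (List A × List A)}
    (hrel : ∀ r ∈ R, eval ρ r.1 = eval ρ r.2)
    (hwf : WellFounded (fun w' w : List A => Rewrites R w w')) (w : List A) :
    ∃ n, RWIrreducible R n ∧ eval ρ n = eval ρ w ∧ Relation.ReflTransGen (Rewrites R) w n := by
  induction w using hwf.induction with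
  | _ w ih =>
    by_cases h : RWIrreducible R w
    · exact ⟨w, h, rfl, .refl⟩
    · unfold RWIrreducible at h
      push Not at h
      obtain ⟨r, hr, x, y, hxy⟩ := h
      have hs : Rewrites R w (x ++ r.2 ++ y) := ⟨r, hr, x, y, hxy.symm, rfl⟩
      obtain ⟨n, hn, he, hred⟩ := ih _ hs
      refine ⟨n, hn, ?_, .head hs hred⟩
      rw [he, ← hxy]
      simp [eval_append, hrel r hr]

/-- a group with a minimal finite complete rewriting system (on a symmetric
alphabet) is stackable, with normal form set the irreducible words. -/
theorem stackable_of_minimal_completeRewritingSystem {G : Type*} [Group G] {A : Type*}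
    [Fintype A]
    (ρ : A → G) (ι : A → A)
    (hgen : Subgroup.closure (Set.range ρ) = ⊤)
    (hne : ∀ a : A, ρ a ≠ 1)
    (hinv : Function.Involutive ι)
    (hρι : ∀ a : A, ρ (ι a) = (ρ a)⁻¹)
    (R : Set (List A × List A)) (hR : IsMinimalCRS ρ R) :
    ∃ (lt : G × A → G × A → Prop) (k : ℕ),
      IsStackableStructure ρ ι {w : List A | RWIrreducible R w} lt k := by
  obtain ⟨⟨hfin, hrel, huniq, hwf⟩, -⟩ := hR
  choose nf hnf hnfu using huniq
  have hnf1 : ∀ g, RWIrreducible R (nf g) := fun g => (hnf g).1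
  have hnf2 : ∀ g, eval ρ (nf g) = g := fun g => (hnf g).2
  have hnf3 : ∀ w, RWIrreducible R w → w = nf (eval ρ w) := fun w hw => hnfu _ w ⟨hw, rfl⟩
  have hnil : ∀ r ∈ R, r.1 ≠ [] := by
    intro r hr h
    exact hnf1 1 r hr (h ▸ List.nil_infix)
  set C : Set (List A) := {w : List A | RWIrreducible R w} with hC
  obtain ⟨K, hK⟩ := (hfin.image (fun r : List A × List A => r.1.length + r.2.length)).bddAbove
  refine ⟨fun e' e => IsRecursive ρ ι C e' ∧ IsRecursive ρ ι C e ∧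
    Above R (nf e'.1 ++ [e'.2]) (nf e.1 ++ [e.2]), K + 1, ?_, ?_, ?_, ?_, ?_, ?_⟩
  · intro r hr h
    exact hnil r hr (List.infix_nil.1 h)
  · intro g
    exact ⟨nf g, hnf g, fun y hy => hnfu g y hy⟩
  · exact fun e e' h => ⟨h.1, h.2.1⟩
  · exact fun a b c h1 h2 => ⟨h1.1, h2.2.1, above_trans h1.2.2 h2.2.2⟩
  · exact Subrelation.wf (fun h => h.2.2)
      (InvImage.wf (fun e : G × A => nf e.1 ++ [e.2]) (above_wf hwf))
  · intro g a
    by_cases hd : IsDegenerate ρ ι C (g, a)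
    · refine ⟨[a], by simp, by simp [eval], ?_⟩
      intro e' he'
      left
      obtain ⟨p, b, q, h, rfl⟩ := edgeOnPath_split he'
      cases p with
      | nil =>
        simp at h
        obtain ⟨rfl, -⟩ := h
        simpa [eval] using hd
      | cons c p => simp at h
    · have hred : ¬ RWIrreducible R (nf g ++ [a]) := by
        intro h
        exact hd ⟨nf g, nf g ++ [a], hnf1 g, hnf2 g, h, by simp [eval_append, hnf2]; simp [eval],
          Or.inl rfl⟩
      unfold RWIrreducible at hred
      push Not at hred
      obtain ⟨⟨u, v⟩, hr, x, y, hxy⟩ := hred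
      simp only at hxy
      have hy : y = [] := by
        rcases List.eq_nil_or_concat y with h | ⟨y', c, h⟩
        · exact h
        · exfalso
          rw [h, List.concat_eq_append, ← List.append_assoc] at hxy
          exact hnf1 g _ hr ⟨x, y', (List.append_inj' hxy rfl).1⟩
      subst hy
      rcases List.eq_nil_or_concat u with h | ⟨u', c, h⟩
      · exact absurd h (hnil _ hr)
      rw [List.concat_eq_append] at h
      subst h
      rw [List.append_nil, ← List.append_assoc] at hxy
      obtain ⟨hx, hc⟩ := List.append_inj' hxy rfl
      simp only [List.cons.injEq, and_true] at hc
      subst hc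
      have hg : eval ρ (x ++ u') = g := by rw [hx, hnf2]
      have hv : eval ρ v = eval ρ u' * ρ c := by
        rw [← hrel _ hr, eval_append]; simp [eval]
      refine ⟨u'.reverse.map ι ++ v, ?_, ?_, ?_⟩
      · have := hK ⟨_, hr, rfl⟩
        simp at this ⊢
        omega
      · rw [eval_append, eval_inv ρ ι hρι, hv]; group
      · intro e' he'
        obtain ⟨p, b, q, h, rfl⟩ := edgeOnPath_split he'
        rcases edge_append (ρ := ρ) (g := g) h with ⟨q', h⟩ | ⟨p', h, he⟩
        · left
          have := degenerate_back (ρ := ρ) hinv hρι (R := R) x u' (hx ▸ hnf1 g) p b q' h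
          rwa [hg] at this
        · by_cases hd' : IsDegenerate ρ ι C (g * eval ρ p, b)
          · exact Or.inl hd'
          right
          refine ⟨hd', hd, ?_⟩
          obtain ⟨n, hn1, hn2, hn3⟩ := exists_nf (ρ := ρ) hrel hwf (x ++ p')
          have hn : n = nf (g * eval ρ p) := by
            rw [hnf3 n hn1, hn2, he, ← hg, eval_inv ρ ι hρι, eval_append, eval_append]
            congr 1; group
          subst hn
          refine ⟨[], q, ?_⟩
          have s1 : Rewrites R (nf g ++ [c]) (x ++ v) :=
            ⟨_, hr, x, [], by simp [← hx], by simp⟩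
          have s2 := reflTransGen_ctx [] (b :: q) hn3
          refine Relation.TransGen.head' s1 ?_
          rw [h]
          simpa using s2

end Stk
end

section
/- Let (A, R, ρ) be a minimal finite complete rewriting system for a group G. Then there exist a finite type B with decidable equality, a map ρ_B : B → G with ρ_B b ≠ 1 for all b ∈ B, an involution ι : B → B with ρ_B(ι b) = (ρ_B b)⁻¹, an injective map j : {a ∈ A : ρ a ≠ 1} → B with ρ_B ∘ j = ρ on this set, and a finite set of rules R̂ making (B, R̂, ρ_B) a minimal finite complete rewriting system for G whose set of irreducible words is exactly the image under j (applied letterwise) of the set of irreducible words of (A, R). -/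
namespace Stk

variable {G : Type*} [Group G] {A : Type*}

theorem infix_map_exists {α β : Type*} (f : α → β) {s : List β} {u : List α}
    (h : s <:+: u.map f) : ∃ t, t <:+: u ∧ s = t.map f := by
  obtain ⟨x, y, hxy⟩ := h
  obtain ⟨p, q, hpq, hp, hq⟩ := List.map_eq_append_iff.1 hxy.symm
  obtain ⟨p1, p2, hp12, h1, h2⟩ := List.map_eq_append_iff.1 hp
  exact ⟨p2, ⟨p1, q, by rw [hpq, hp12]⟩, h2.symm⟩

theorem RWIrreducible.subword {A : Type*} {R : Set (List A × List A)} {u w : List A}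
    (hw : RWIrreducible R w) (h : u <:+: w) : RWIrreducible R u :=
  fun r hr hru => hw r hr (hru.trans h)


/-- Letters of irreducible words are nontrivial in the group. -/
theorem irreducible_lift {G : Type*} [Group G] {A : Type*}
    (ρ : A → G) (R : Set (List A × List A)) (hR : IsMinimalCRS ρ R) (w : List A)
    (hw : RWIrreducible R w) : ∃ u : List {a : A // ρ a ≠ 1}, w = u.map Subtype.val := by
  have h : ∀ a ∈ w, ρ a ≠ 1 := by
    intro a ha h1
    have hi : [a] <:+: w := by
      obtain ⟨x, y, rfl⟩ := List.append_of_mem ha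
      exact ⟨x, y, by simp⟩
    have h0 : RWIrreducible R ([] : List A) := hw.subword (List.nil_infix)
    have := (hR.1.2.2.1 1).unique ⟨hw.subword hi, by simp [eval, h1]⟩ ⟨h0, by simp [eval]⟩
    simp at this
  lift w to List {a : A // ρ a ≠ 1} using h
  exact ⟨w, rfl⟩

/-- a minimal finite complete rewriting system can be replaced by a minimal
finite complete rewriting system on a finite symmetric alphabet with decidable equality
(realized as `Fin n`) with letterwise-corresponding irreducible words. -/
theorem symmetrize_minimal_completeRewritingSystem {G : Type*} [Group G] {A : Type*}
    [Fintype A]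
    (ρ : A → G) (R : Set (List A × List A)) (hR : IsMinimalCRS ρ R) :
    ∃ (n : ℕ) (ρB : Fin n → G) (ι : Fin n → Fin n)
      (j : {a : A // ρ a ≠ 1} → Fin n)
      (Rhat : Set (List (Fin n) × List (Fin n))),
      (∀ b : Fin n, ρB b ≠ 1) ∧
      Function.Involutive ι ∧
      (∀ b : Fin n, ρB (ι b) = (ρB b)⁻¹) ∧
      Function.Injective j ∧
      (∀ a : {a : A // ρ a ≠ 1}, ρB (j a) = ρ a.1) ∧
      IsMinimalCRS ρB Rhat ∧
      {w : List (Fin n) | RWIrreducible Rhat w} =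
        {w' : List (Fin n) | ∃ w : List {a : A // ρ a ≠ 1},
          RWIrreducible R (w.map Subtype.val) ∧ w' = w.map j} := by
  classical
  have hlift := irreducible_lift ρ R hR
  obtain ⟨⟨hfin, heval, hnf, hwf⟩, hmin⟩ := hR
  let A' := {a : A // ρ a ≠ 1}
  have hN : ∀ a : A', ∃ u : List A', RWIrreducible R (u.map Subtype.val) ∧
      eval ρ (u.map Subtype.val) = (ρ a.1)⁻¹ := by
    intro a
    obtain ⟨w, ⟨hw, hw'⟩, -⟩ := hnf (ρ a.1)⁻¹
    obtain ⟨u, rfl⟩ := hlift w hw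
    exact ⟨u, hw, hw'⟩
  choose N hN1 hN2 using hN
  let n := Fintype.card (A' ⊕ A')
  let e : A' ⊕ A' ≃ Fin n := Fintype.equivFin _
  let ρS : A' ⊕ A' → G := Sum.elim (fun a => ρ a.1) (fun a => (ρ a.1)⁻¹)
  let ρB : Fin n → G := fun b => ρS (e.symm b)
  let j : A' → Fin n := fun a => e (Sum.inl a)
  have hj : Function.Injective j := fun a b h => Sum.inl_injective (e.injective h)
  have hρj : ∀ a : A', ρB (j a) = ρ a.1 := by intro a; simp [ρB, j, ρS]
  have hρk : ∀ a : A', ρB (e (Sum.inr a)) = (ρ a.1)⁻¹ := by intro a; simp [ρB, ρS]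
  have hevj : ∀ u : List A', eval ρB (u.map j) = eval ρ (u.map Subtype.val) := by
    intro u
    simp only [eval, List.map_map]
    congr 1
    apply List.map_congr_left
    intro a _
    exact hρj a
  let R1 : Set (List (Fin n) × List (Fin n)) :=
    (fun p : List A' × List A' => (p.1.map j, p.2.map j)) ''
      ((fun p : List A' × List A' => (p.1.map Subtype.val, p.2.map Subtype.val)) ⁻¹' R)
  let R2 : Set (List (Fin n) × List (Fin n)) :=
    Set.range (fun a : A' => ([e (Sum.inr a)], (N a).map j))
  have hirr : ∀ w : List (Fin n), RWIrreducible (R1 ∪ R2) w ↔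
      ∃ u : List A', RWIrreducible R (u.map Subtype.val) ∧ w = u.map j := by
    intro w
    constructor
    · intro hw
      have hall : ∀ b ∈ w, b ∈ Set.range j := by
        intro b hb
        obtain ⟨s, rfl⟩ := e.surjective b
        rcases s with a | a
        · exact ⟨a, rfl⟩
        · exfalso
          refine hw _ (Or.inr ⟨a, rfl⟩) ?_
          obtain ⟨x, y, rfl⟩ := List.append_of_mem hb
          exact ⟨x, y, by simp⟩
      obtain ⟨u, rfl⟩ : ∃ u : List A', u.map j = w := by
        have : w ∈ Set.range (List.map j) := by
          rw [Set.range_list_map]; exact hall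
        exact this
      refine ⟨u, ?_, rfl⟩
      rintro ⟨r1, r2⟩ hr hru
      obtain ⟨t, ht, htr⟩ := infix_map_exists _ hru
      obtain ⟨v, hv⟩ := hlift r2 (hmin _ hr).1
      dsimp only at htr
      subst htr hv
      exact hw (t.map j, v.map j) (Or.inl ⟨(t, v), hr, rfl⟩) (ht.map j)
    · rintro ⟨u, hu, rfl⟩ r (⟨⟨p, q⟩, hpq, rfl⟩ | ⟨a, rfl⟩) hr
      · obtain ⟨t, ht, htr⟩ := infix_map_exists _ hr
        have : p = t := List.map_injective_iff.2 hj htr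
        subst this
        exact hu _ hpq (ht.map _)
      · have hm : e (Sum.inr a) ∈ u.map j := hr.subset (by simp)
        obtain ⟨b, _, hb⟩ := List.mem_map.1 hm
        have := e.injective hb
        simp at this
  have hmapv : Function.Injective (List.map (Subtype.val : A' → A)) :=
    List.map_injective_iff.2 Subtype.val_injective
  refine ⟨n, ρB, fun b => e (e.symm b).swap, j, R1 ∪ R2, ?_, ?_, ?_, hj, hρj,
    ⟨⟨?_, ?_, ?_, ?_⟩, ?_⟩, ?_⟩
  · intro b
    obtain ⟨s, rfl⟩ := e.surjective b
    rcases s with a | a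
    · have := hρj a
      simp only [j] at this
      rw [this]; exact a.2
    · rw [hρk]; exact inv_ne_one.2 a.2
  · intro b; simp
  · intro b
    obtain ⟨s, rfl⟩ := e.surjective b
    rcases s with a | a <;> simp [ρB, ρS]
  · refine Set.Finite.union (Set.Finite.image _ (hfin.preimage ?_)) (Set.finite_range _)
    rintro ⟨p, q⟩ _ ⟨p', q'⟩ _ h
    simp only [Prod.mk.injEq] at h ⊢
    exact ⟨hmapv h.1, hmapv h.2⟩
  · rintro r (⟨⟨p, q⟩, hpq, rfl⟩ | ⟨a, rfl⟩)
    · simp only [hevj]; exact heval _ hpq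
    · simp only [hevj, hN2]
      simp [eval, hρk]
  · intro g
    obtain ⟨w, ⟨hw, hw'⟩, huniq⟩ := hnf g
    obtain ⟨u, rfl⟩ := hlift w hw
    refine ⟨u.map j, ⟨(hirr _).2 ⟨u, hw, rfl⟩, by rw [hevj, hw']⟩, ?_⟩
    rintro w2 ⟨h2, h2'⟩
    obtain ⟨u2, hu2, rfl⟩ := (hirr _).1 h2
    rw [hevj] at h2'
    rw [hmapv (huniq _ ⟨hu2, h2'⟩)]
  · let φ : Fin n → List A := fun b =>
      Sum.elim (fun a : A' => [a.1]) (fun a : A' => (N a).map Subtype.val) (e.symm b)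
    let c : List (Fin n) → ℕ := fun w => w.countP (fun b => (e.symm b).isRight)
    have hφj : ∀ u : List A', (u.map j).flatMap φ = u.map Subtype.val := by
      intro u
      induction u with
      | nil => rfl
      | cons a u ih =>
        rw [List.map_cons, List.flatMap_cons, ih]
        simp [φ, j]
    have hcj : ∀ u : List A', c (u.map j) = 0 := by
      intro u
      simp [c, j]
    have hlex := WellFounded.prod_lex hwf (wellFounded_lt (α := ℕ))
    refine Subrelation.wf (h₁ := ?_) (InvImage.wf (fun w => (w.flatMap φ, c w)) hlex)
    rintro w' w ⟨r, hr, x, y, rfl, rfl⟩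
    rcases hr with (⟨⟨p, q⟩, hpq, rfl⟩ | ⟨a, rfl⟩)
    · refine Prod.Lex.left _ _ ⟨_, hpq, x.flatMap φ, y.flatMap φ, ?_, ?_⟩
      · simp only [List.flatMap_append, hφj]
      · simp only [List.flatMap_append, hφj]
    · have h1 : (x ++ (N a).map j ++ y).flatMap φ = (x ++ [e (Sum.inr a)] ++ y).flatMap φ := by
        simp only [List.flatMap_append, hφj]
        simp [φ]
      have h2 : c (x ++ (N a).map j ++ y) < c (x ++ [e (Sum.inr a)] ++ y) := by
        have h0 := hcj (N a)
        simp only [c, List.countP_append] at h0 ⊢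
        rw [h0]
        simp
      simp only [InvImage]
      rw [h1]
      exact Prod.Lex.right _ h2
  · rintro r (⟨⟨p, q⟩, hpq, rfl⟩ | ⟨a, rfl⟩)
    · refine ⟨(hirr _).2 ⟨q, (hmin _ hpq).1, rfl⟩, ?_⟩
      intro u hu hne
      obtain ⟨t, ht, rfl⟩ := infix_map_exists _ hu
      refine (hirr _).2 ⟨t, (hmin _ hpq).2 _ (ht.map _) ?_, rfl⟩
      intro h
      exact hne (by rw [hmapv h])
    · refine ⟨(hirr _).2 ⟨N a, hN1 a, rfl⟩, ?_⟩
      intro u hu hne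
      have hu0 : u = [] := by
        have hlen : u.length ≤ 1 := hu.length_le
        by_contra h0
        have : u.length ≠ 0 := fun h => h0 (List.length_eq_zero_iff.1 h)
        exact hne (hu.eq_of_length (by simp; omega))
      subst hu0
      exact (hirr _).2 ⟨[], (hN1 a).subword List.nil_infix, rfl⟩
  · ext w
    exact hirr w

end Stk
end
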